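/- arXiv:1002.1869 — 2 statements merged into one kernel-verified Lean document; each statement's English description precedes it below -/
import Mathlib

section
/- Let S be a commutative, cancellative, torsion-free monoid and R a commutative ring with identity. Then R is an integral domain if and only if the semigroup ring R[S] is an integral domain. -/
theorem uniqueSums_of_cancel_torsionFree {S : Type*} [AddCancelCommMonoid S]
    (htf : ∀ (n : ℕ) (s t : S), 1 ≤ n → n • s = n • t → s = t) : UniqueSums S where
  uniqueAdd_of_nonempty := by
    classical
    intro A B hA hB
    let C : Finset S := A ∪ B
    let M := AddSubmonoid.closure (C : Set S)
    have hAM : ∀ a ∈ A, a ∈ M := fun a ha =>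
      AddSubmonoid.subset_closure (Finset.mem_coe.2 (Finset.mem_union_left _ ha))
    have hBM : ∀ a ∈ B, a ∈ M := fun a ha =>
      AddSubmonoid.subset_closure (Finset.mem_coe.2 (Finset.mem_union_right _ ha))
    have : AddMonoid.FG M := AddMonoid.closure_finset_fg C
    have : IsAddTorsionFree M := ⟨fun n hn a b h =>
      Subtype.ext (htf n a b (Nat.one_le_iff_ne_zero.2 hn) (congrArg Subtype.val h))⟩
    letI inst : AddCancelCommMonoid M :=
      { (inferInstance : AddCommMonoid M) with
        add_left_cancel := fun s t u h =>
          Subtype.ext (add_left_cancel (congrArg Subtype.val h : (s : S) + t = s + u)) }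
    have : TwoUniqueSums M := @AffineAddMonoid.to_twoUniqueSums M inst ‹_› ‹_›
    obtain ⟨a0, ha0⟩ := hA
    obtain ⟨b0, hb0⟩ := hB
    obtain ⟨a, ha, b, hb, h⟩ := UniqueSums.uniqueAdd_of_nonempty
      (A := A.subtype (· ∈ M)) (B := B.subtype (· ∈ M))
      ⟨⟨a0, hAM a0 ha0⟩, Finset.mem_subtype.2 ha0⟩ ⟨⟨b0, hBM b0 hb0⟩, Finset.mem_subtype.2 hb0⟩
    refine ⟨a, Finset.mem_subtype.1 ha, b, Finset.mem_subtype.1 hb, fun x y hx hy hxy => ?_⟩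
    have := @h ⟨x, hAM x hx⟩ ⟨y, hBM y hy⟩ (Finset.mem_subtype.2 hx) (Finset.mem_subtype.2 hy)
      (Subtype.ext hxy)
    exact ⟨congrArg Subtype.val this.1, congrArg Subtype.val this.2⟩

/-- For `S` a commutative, cancellative, torsion-free monoid, `R` is an integral domain iff the
semigroup ring `R[S]` is an integral domain. -/
theorem isDomain_iff_isDomain_addMonoidAlgebra {R S : Type*} [CommRing R] [AddCommMonoid S]
    (hcan : ∀ s t u : S, s + t = s + u → t = u)
    (htf : ∀ (n : ℕ) (s t : S), 1 ≤ n → n • s = n • t → s = t) :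
    IsDomain R ↔ IsDomain (AddMonoidAlgebra R S) := by
  constructor
  · intro hR
    have : UniqueSums S :=
      @uniqueSums_of_cancel_torsionFree S
        { (inferInstance : AddCommMonoid S) with add_left_cancel := fun s t u h => hcan s t u h } htf
    have : NoZeroDivisors (AddMonoidAlgebra R S) := inferInstance
    have : Nontrivial (AddMonoidAlgebra R S) := inferInstance
    exact NoZeroDivisors.to_isDomain _
  · intro h
    exact Function.Injective.isDomain (AddMonoidAlgebra.singleZeroRingHom (R := R) (M := S))
      AddMonoidAlgebra.single_right_injective
end

section
/- Let R be a commutative ring with identity and M an R-module. If M has very few zero-divisors (Z_R(M) is a finite union of associated primes of M), then M has Property (A): every finitely generated ideal I of R with I ⊆ Z_R(M) has a nonzero annihilator in M. -/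
/-- If the `R`-module `M` has very few zero-divisors (`Z_R(M)` is a finite union of associated
primes of `M`), then `M` has Property (A): every finitely generated ideal contained in `Z_R(M)`
has a nonzero annihilator in `M`. -/
theorem propertyA_of_very_few_zeroDivisors {R M : Type*} [CommRing R] [AddCommGroup M] [Module R M]
    (n : ℕ) (p : Fin n → Ideal R)
    (hprime : ∀ i, (p i).IsPrime)
    (hass : ∀ i, ∃ m : M, ∀ r : R, r ∈ p i ↔ r • m = 0)
    (hZ : {r : R | ∃ x : M, x ≠ 0 ∧ r • x = 0} = ⋃ i, (p i : Set R)) :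
    ∀ I : Ideal R, I.FG → (I : Set R) ⊆ {r : R | ∃ x : M, x ≠ 0 ∧ r • x = 0} →
        ∃ x : M, x ≠ 0 ∧ ∀ r ∈ I, r • x = 0 := by
  intro I _ hI
  rw [hZ] at hI
  obtain ⟨a, _⟩ := Set.mem_iUnion.1 (hI I.zero_mem)
  obtain ⟨i, _, hi⟩ := (Ideal.subset_union_prime (s := Finset.univ) (f := p) a a
    (fun i _ _ _ => hprime i) (I := I)).1 (by simpa using hI)
  obtain ⟨m, hm⟩ := hass i
  refine ⟨m, ?_, fun r hr => (hm r).1 (hi hr)⟩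
  rintro rfl
  exact (hprime i).ne_top ((Ideal.eq_top_iff_one _).2 ((hm 1).2 (smul_zero _)))
end
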